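/- Let H be a graph with a cut vertex v whose removal results in the disjoint union of two (possibly disconnected) subgraphs H' and H''. Let D be a divisor on the subgraph H'' ∪ {v} of rank r as a divisor on H'' ∪ {v}, and let F be an effective divisor on H such that D ≤ F|_{H'' ∪ {v}}. Then for every effective divisor E of degree r supported on H'' ∪ {v}, the divisor F - E is linearly equivalent to an effective divisor on H. -/

import Mathlib

open Finset

variable {V : Type*} [Fintype V] [DecidableEq V]

/-- A finite loopless multigraph on vertex type `V`, given by symmetric edge multiplicities. -/
structure Multigraph (V : Type*) [Fintype V] [DecidableEq V] where
  mult : V → V → ℕ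
  symm : ∀ u v, mult u v = mult v u
  loopless : ∀ v, mult v v = 0

namespace Multigraph

def Adj (G : Multigraph V) (u v : V) : Prop := 0 < G.mult u v

/-- A graph is connected. -/
def Connected (G : Multigraph V) : Prop :=
  Nonempty V ∧ ∀ u v : V, Relation.ReflTransGen G.Adj u v

/-- Valence of a vertex. -/
def valence (G : Multigraph V) (v : V) : ℕ := ∑ u, G.mult v u

/-- The Laplacian applied to an integer-valued function on the vertices. -/
def laplacian (G : Multigraph V) (f : V → ℤ) : V → ℤ :=
  fun w => ∑ u, (G.mult w u : ℤ) * (f w - f u)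

/-- Degree of a divisor. -/
def degree (D : V → ℤ) : ℤ := ∑ v, D v

/-- A divisor is effective if all coefficients are nonnegative. -/
def Effective (D : V → ℤ) : Prop := ∀ v, 0 ≤ D v

/-- Linear equivalence of divisors: they differ by a sequence of chip-firing moves,
equivalently by a Laplacian of an integer function. -/
def LinEquiv (G : Multigraph V) (D D' : V → ℤ) : Prop :=
  ∃ f : V → ℤ, D' = D - G.laplacian f

/-- A divisor is winnable if it is linearly equivalent to an effective divisor. -/
def Winnable (G : Multigraph V) (D : V → ℤ) : Prop :=
  ∃ E : V → ℤ, Effective E ∧ G.LinEquiv D E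

/-- The Baker–Norine rank of a divisor: the largest `r` such that `D - E` is winnable for
every effective divisor `E` of degree `r` (the defining set contains all negative integers,
and its supremum is `-1` precisely when `D` itself is not winnable). -/
noncomputable def rank (G : Multigraph V) (D : V → ℤ) : ℤ :=
  sSup {r : ℤ | ∀ E : V → ℤ, Effective E → degree E = r → G.Winnable (fun w => D w - E w)}

/-- The `k`-th gonality of a graph: the smallest degree of a divisor of rank `k`. -/
noncomputable def gonality (G : Multigraph V) (k : ℤ) : ℤ :=
  sInf {d : ℤ | ∃ D : V → ℤ, G.rank D = k ∧ degree D = d}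

/-- A graph is gonality-tight if its second gonality exceeds its first by exactly 1. -/
def GonalityTight (G : Multigraph V) : Prop :=
  G.gonality 2 = G.gonality 1 + 1

/-- A divisor realises the `k`-th gonality if it has rank `k` and degree `gon_k(G)`. -/
def Realises (G : Multigraph V) (k : ℤ) (D : V → ℤ) : Prop :=
  G.rank D = k ∧ degree D = G.gonality k

/-- A divisor is `v`-reduced: nonnegative away from `v`, and set-firing any nonempty set of
vertices not containing `v` creates a negative coefficient inside the set. -/
def Reduced (G : Multigraph V) (v : V) (D : V → ℤ) : Prop :=
  (∀ w, w ≠ v → 0 ≤ D w) ∧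
    ∀ U : Finset V, U.Nonempty → v ∉ U →
      ∃ w ∈ U, D w - ∑ u ∈ Uᶜ, (G.mult w u : ℤ) < 0

/-- The genus (first Betti number) of a graph: `|E| - |V| + 1`. -/
def genus (G : Multigraph V) : ℤ :=
  ((∑ u, ∑ v, G.mult u v : ℕ) : ℤ) / 2 - Fintype.card V + 1

/-- The canonical divisor of a graph. -/
def canonical (G : Multigraph V) : V → ℤ :=
  fun w => (G.valence w : ℤ) - 2

/-- The subgraph induced on a set `S` of vertices (with all edges among `S`). -/
def induce (G : Multigraph V) (S : Finset V) : Multigraph {x // x ∈ S} where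
  mult a b := G.mult a b
  symm a b := G.symm a b
  loopless a := G.loopless a

/-- `G.SeparatedBy u w v` means every path from `w` to `v` passes through `u`. -/
def SeparatedBy (G : Multigraph V) (u w v : V) : Prop :=
  ¬ Relation.ReflTransGen (fun x y => G.Adj x y ∧ x ≠ u ∧ y ≠ u) w v

end Multigraph

/-- Size of the `i`-th level of a quasi-banana graph: level `0` has a single vertex. -/
def qbSize (q : ℕ → ℕ) (i : ℕ) : ℕ := if i = 0 then 1 else q i

/-- `ℓ` is a quasi-banana labelling of `G` exhibiting `G ≅ QB_m(q_1, …, q_m)`: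
`ℓ` is a bijection onto the pairs `(i, j)` with `i ≤ m`, `1 ≤ j ≤ qbSize q i`
(vertex `u_{i,j}` is the vertex labelled `(i,j)`), and the edge multiplicities are:
one edge between distinct vertices of the same level, `(∑_{k=1}^{i} q_k) + 2` edges
between `u_{i,1}` and each `u_{i+1,j}`, and no other edges. -/
def Multigraph.IsQBLabelling (G : Multigraph V) (m : ℕ) (q : ℕ → ℕ) (ℓ : V → ℕ × ℕ) : Prop :=
  (∀ i, 1 ≤ i → i ≤ m → 0 < q i) ∧
  Function.Injective ℓ ∧
  (∀ v : V, (ℓ v).1 ≤ m ∧ 1 ≤ (ℓ v).2 ∧ (ℓ v).2 ≤ qbSize q (ℓ v).1) ∧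
  (∀ i j : ℕ, i ≤ m → 1 ≤ j → j ≤ qbSize q i → ∃ v, ℓ v = (i, j)) ∧
  (∀ v w : V, v ≠ w → G.mult v w =
    if (ℓ v).1 = (ℓ w).1 then 1
    else if (ℓ v).1 + 1 = (ℓ w).1 ∧ (ℓ v).2 = 1 then (∑ i ∈ Finset.Icc 1 (ℓ v).1, q i) + 2
    else if (ℓ w).1 + 1 = (ℓ v).1 ∧ (ℓ w).2 = 1 then (∑ i ∈ Finset.Icc 1 (ℓ w).1, q i) + 2
    else 0)

/-- A graph is a quasi-banana graph if it is isomorphic to some `QB_m(N)`. -/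
def Multigraph.IsQuasiBanana (G : Multigraph V) : Prop :=
  ∃ (m : ℕ) (q : ℕ → ℕ) (ℓ : V → ℕ × ℕ), G.IsQBLabelling m q ℓ

/-- The graph obtained from `G'` by attaching a complete graph `K_n`: `n` new vertices
pairwise joined by exactly one edge, each joined to `v` by exactly `k+1` edges. -/
def attachComplete (G' : Multigraph V) (v : V) (k n : ℕ) : Multigraph (V ⊕ Fin n) where
  mult x y :=
    match x, y with
    | Sum.inl a, Sum.inl b => G'.mult a b
    | Sum.inl a, Sum.inr _ => if a = v then k + 1 else 0
    | Sum.inr _, Sum.inl b => if b = v then k + 1 else 0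
    | Sum.inr i, Sum.inr j => if i = j then 0 else 1
  symm := by
    rintro (a | i) (b | j)
    · exact G'.symm a b
    · rfl
    · rfl
    · by_cases h : i = j
      · simp [h]
      · simp [h, Ne.symm h]
  loopless := by
    rintro (a | i)
    · exact G'.loopless a
    · simp

/-!
Suppose that `v` is the only vertex of `S` with edges leaving `S`. A firing script `f` on the
subgraph induced on `S` extends to all of `H` by giving every vertex outside `S` the value `f v`,
that is, by pulling `f` back along the map collapsing the complement of `S` to `v`. Adjacent
vertices outside `S`, and `v` with its neighbours outside `S`, then have equal values, so no chips
move along any edge that is not in the subgraph. Thus a script making `D - E` effective on `S`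
also makes `F - E` effective on `H`.
-/

namespace Multigraph

section Degree

variable {W : Type*} [Fintype W]

theorem degree_sub (D E : W → ℤ) : degree (D - E) = degree D - degree E :=
  Finset.sum_sub_distrib D E

theorem degree_comp_subtype_val {S : Finset W} {E : W → ℤ} (hE : ∀ w ∉ S, E w = 0) :
    degree (fun x : S => E x) = degree E :=
  (Finset.sum_coe_sort S E).trans <| Finset.sum_subset S.subset_univ fun w _ hw => hE w hw

theorem Effective.degree_nonneg {D : W → ℤ} (hD : Effective D) : 0 ≤ degree D :=
  Finset.sum_nonneg fun w _ => hD w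

end Degree

theorem degree_single (x : V) (n : ℤ) : degree (Pi.single x n) = n :=
  Fintype.sum_pi_single' x n

theorem degree_laplacian (G : Multigraph V) (f : V → ℤ) : degree (G.laplacian f) = 0 := by
  have antisymm : degree (G.laplacian f) = -degree (G.laplacian f) :=
    calc ∑ w, ∑ u, (G.mult w u : ℤ) * (f w - f u)
        = ∑ u, ∑ w, (G.mult w u : ℤ) * (f w - f u) := Finset.sum_comm
      _ = ∑ u, ∑ w, -((G.mult u w : ℤ) * (f u - f w)) := by
          refine Finset.sum_congr rfl fun u _ => Finset.sum_congr rfl fun w _ => ?_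
          rw [G.symm w u]
          ring
      _ = -∑ u, ∑ w, (G.mult u w : ℤ) * (f u - f w) := by
          simp only [Finset.sum_neg_distrib]
  linarith

theorem LinEquiv.degree_eq {G : Multigraph V} {D D' : V → ℤ} (h : G.LinEquiv D D') :
    degree D = degree D' := by
  obtain ⟨f, rfl⟩ := h
  rw [degree_sub, degree_laplacian, sub_zero]

theorem Winnable.degree_nonneg {G : Multigraph V} {D : V → ℤ} (h : G.Winnable D) :
    0 ≤ degree D := by
  obtain ⟨E, hE, hDE⟩ := h
  exact hDE.degree_eq ▸ hE.degree_nonneg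

/-- The condition `r ≤ r(D)` in the usual convention: `D - E` is winnable for every effective
divisor `E` of degree `r`. It holds vacuously for negative `r`, and `rank` is the supremum of the
integers satisfying it. -/
def RankAtLeast (G : Multigraph V) (D : V → ℤ) (r : ℤ) : Prop :=
  ∀ E : V → ℤ, Effective E → degree E = r → G.Winnable (fun w => D w - E w)

theorem rankAtLeast_of_neg (G : Multigraph V) (D : V → ℤ) {r : ℤ} (hr : r < 0) :
    G.RankAtLeast D r :=
  fun _ hE hdeg => absurd hE.degree_nonneg (hdeg ▸ hr.not_ge)

theorem RankAtLeast.le_degree [Nonempty V] {G : Multigraph V} {D : V → ℤ} {r : ℤ}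
    (h : G.RankAtLeast D r) (hr : 0 ≤ r) : r ≤ degree D := by
  obtain ⟨x⟩ := ‹Nonempty V›
  have effective_single : Effective (Pi.single x r : V → ℤ) :=
    (Pi.single_nonneg (α := fun _ => ℤ)).mpr hr
  have nonneg : 0 ≤ degree (D - Pi.single x r) :=
    (h _ effective_single (degree_single x r)).degree_nonneg
  rwa [degree_sub, degree_single, sub_nonneg] at nonneg

theorem rankAtLeast_rank [Nonempty V] (G : Multigraph V) (D : V → ℤ) :
    G.RankAtLeast D (G.rank D) := by
  have nonempty : {r | G.RankAtLeast D r}.Nonempty :=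
    ⟨-1, G.rankAtLeast_of_neg D (by norm_num)⟩
  have bddAbove : BddAbove {r | G.RankAtLeast D r} :=
    ⟨max 0 (degree D), fun r h => (le_total r 0).elim (le_max_of_le_left ·)
      fun hr => le_max_of_le_right (h.le_degree hr)⟩
  exact Int.csSup_mem nonempty bddAbove

section Collapse

variable {W : Type*} [DecidableEq W] {S : Finset W}

/-- The retraction of the vertex set onto `S` sending every vertex outside `S` to `v`; firing
scripts on the subgraph induced on `S` are extended to the whole graph by pulling back along it. -/
def collapse (v : S) (w : W) : S :=
  if h : w ∈ S then ⟨w, h⟩ else v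

theorem collapse_coe (v x : S) : collapse v x = x :=
  dif_pos x.2

theorem collapse_of_notMem (v : S) {w : W} (hw : w ∉ S) : collapse v w = v :=
  dif_neg hw

end Collapse

section Attachment

variable {H : Multigraph V} {S : Finset V} {v : S}

/-- `S` is attached to the rest of `H` at `v`: no edge leaving `S` starts at a vertex of `S` other
than `v`. This is the situation of `S = H'' ∪ {v}` for a cut vertex `v`; the complement of `S` may
be empty. -/
def IsAttachedAt (H : Multigraph V) (S : Finset V) (v : S) : Prop :=
  ∀ a ∉ S, ∀ b ∈ S, b ≠ v → H.mult a b = 0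

theorem isAttachedAt_insert (H : Multigraph V) {v : V} {A B : Finset V}
    (hAB : A ∪ B = Finset.univ.erase v) (hnoedge : ∀ a ∈ A, ∀ b ∈ B, H.mult a b = 0) :
    H.IsAttachedAt (insert v B) ⟨v, Finset.mem_insert_self v B⟩ := by
  intro a ha b hb hbv
  rw [Finset.mem_insert, not_or] at ha
  have mem_union : a ∈ A ∪ B := hAB ▸ Finset.mem_erase.mpr ⟨ha.1, Finset.mem_univ a⟩
  exact hnoedge a ((Finset.mem_union.mp mem_union).resolve_right ha.2) b
    (Finset.mem_of_mem_insert_of_ne hb hbv)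

theorem IsAttachedAt.laplacian_comp_collapse_coe (h : H.IsAttachedAt S v) (f : S → ℤ) (x : S) :
    H.laplacian (f ∘ collapse v) x = (H.induce S).laplacian f x := by
  have eq_zero_of_notMem : ∀ u ∉ S,
      (H.mult x u : ℤ) * (f (collapse v x) - f (collapse v u)) = 0 := by
    intro u hu
    by_cases hx : x = v
    · rw [hx, collapse_coe, collapse_of_notMem v hu, sub_self, mul_zero]
    · rw [H.symm, h u hu x x.2 (Subtype.coe_ne_coe.mpr hx), Nat.cast_zero, zero_mul]
  calc ∑ u, (H.mult x u : ℤ) * (f (collapse v x) - f (collapse v u))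
      = ∑ u ∈ S, (H.mult x u : ℤ) * (f (collapse v x) - f (collapse v u)) :=
        (Finset.sum_subset S.subset_univ fun u _ => eq_zero_of_notMem u).symm
    _ = ∑ u : S, (H.mult x u : ℤ) * (f (collapse v x) - f (collapse v u)) :=
        (Finset.sum_coe_sort S _).symm
    _ = ∑ u : S, (H.mult x u : ℤ) * (f x - f u) := by simp only [collapse_coe]

theorem IsAttachedAt.laplacian_comp_collapse_of_notMem (h : H.IsAttachedAt S v) (f : S → ℤ)
    {w : V} (hw : w ∉ S) : H.laplacian (f ∘ collapse v) w = 0 := by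
  refine Finset.sum_eq_zero fun u _ => ?_
  by_cases collapse_eq : collapse v u = v
  · rw [Function.comp_apply, Function.comp_apply, collapse_of_notMem v hw, collapse_eq, sub_self,
      mul_zero]
  · have hu : u ∈ S := by_contra fun hu => collapse_eq (collapse_of_notMem v hu)
    have hne : u ≠ v := fun huv => collapse_eq (huv ▸ collapse_coe v v)
    rw [h w hw u hu hne, Nat.cast_zero, zero_mul]

theorem IsAttachedAt.winnable (h : H.IsAttachedAt S v) {D : S → ℤ} (hD : (H.induce S).Winnable D)
    {F : V → ℤ} (hDF : ∀ x : S, D x ≤ F x) (hF : ∀ w ∉ S, 0 ≤ F w) : H.Winnable F := by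
  obtain ⟨_, effective, f, rfl⟩ := hD
  refine ⟨F - H.laplacian (f ∘ collapse v), fun w => ?_, f ∘ collapse v, rfl⟩
  rw [Pi.sub_apply]
  by_cases hw : w ∈ S
  · rw [h.laplacian_comp_collapse_coe f ⟨w, hw⟩]
    exact (effective ⟨w, hw⟩).trans (sub_le_sub_right (hDF ⟨w, hw⟩) _)
  · rw [h.laplacian_comp_collapse_of_notMem f hw, sub_zero]
    exact hF w hw

end Attachment

end Multigraph

theorem stmt8_general {H : Multigraph V} {S : Finset V} {v : S} (hS : H.IsAttachedAt S v)
    {D : S → ℤ} {F : V → ℤ} (hF : ∀ w ∉ S, 0 ≤ F w) (hDF : ∀ x : S, D x ≤ F x)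
    {E : V → ℤ} (hE : Multigraph.Effective E) (hEsupp : ∀ w ∉ S, E w = 0)
    (hEdeg : Multigraph.degree E = (H.induce S).rank D) :
    H.Winnable (fun w => F w - E w) := by
  have : Nonempty S := ⟨v⟩
  have winnable_on_S : (H.induce S).Winnable (fun x => D x - E x) :=
    (H.induce S).rankAtLeast_rank D _ (fun x => hE x)
      ((Multigraph.degree_comp_subtype_val hEsupp).trans hEdeg)
  refine hS.winnable winnable_on_S (fun x => sub_le_sub_right (hDF x) _) fun w hw => ?_
  rw [hEsupp w hw, sub_zero]
  exact hF w hw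

/-- If `v` is a cut vertex splitting `H` into `H'` (vertex set `A`) and
`H''` (vertex set `B`), `D` is a divisor of rank `r` on `H'' ∪ {v}`, and `F` is an effective
divisor on `H` with `D ≤ F|_{H'' ∪ {v}}`, then for every effective divisor `E` of degree `r`
supported on `H'' ∪ {v}`, the divisor `F - E` is winnable on `H`. -/
theorem stmt8 (H : Multigraph V) (hH : H.Connected)
    (v : V) (A B : Finset V)
    (hAB : A ∪ B = Finset.univ.erase v) (hdisj : Disjoint A B)
    (hnoedge : ∀ a ∈ A, ∀ b ∈ B, H.mult a b = 0)
    (D : {x // x ∈ insert v B} → ℤ) (r : ℤ)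
    (hD : (H.induce (insert v B)).rank D = r)
    (F : V → ℤ) (hF : Multigraph.Effective F)
    (hDF : ∀ x : {x // x ∈ insert v B}, D x ≤ F x.1)
    (E : V → ℤ) (hE : Multigraph.Effective E)
    (hEdeg : Multigraph.degree E = r)
    (hEsupp : ∀ w, w ∉ insert v B → E w = 0) :
    H.Winnable (fun w => F w - E w) :=
  stmt8_general (H.isAttachedAt_insert hAB hnoedge) (fun w _ => hF w) hDF hE hEsupp
    (hEdeg.trans hD.symm)
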